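/- For any γ > 0 and δ ∈ (0,1), with probability at least 1-δ the lower-tail bound v(π) - ṽ_n(π) ≤ log(|Π|/δ)/(2γn) + 2γ·C_γ(π) holds simultaneously for all π in the finite policy class Π. -/

import Mathlib

/-!
The proof is the exponential-moment (Chernoff) method with parameter `2γ`, followed by a union bound.

For one observation put `w = π(A|X) / (μ(A|X) + γ)`, so that the IX term is `w R`. Since `w R ≥ 0`,
the inequality `exp (-y) ≤ 1 - y + y² / 2` (`exp_neg_le_quadratic`) together with `R² ≤ R` gives
`exp (-2γ w R) ≤ 1 - 2γ w R + 2γ² w² R`. Averaging over `R` and `A`, and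
using `μ / (μ + γ) = 1 - γ / (μ + γ)` for the linear term (this is the bias of the IX estimator) and
`μ π² / (μ + γ)² ≤ π / (μ + γ)` for the quadratic one (`action_bound`), yields
`E exp (-2γ w R) ≤ 1 - 2γ v(π) + 4γ² C_γ(π) ≤ exp (-2γ v(π) + 4γ² C_γ(π))` (`lintegral_exp_ixTerm_le`).
By independence `E exp (2γ n (v(π) - ṽ_n(π) - 2γ C_γ(π))) ≤ 1` (`lintegral_exp_ixEst_le`), so Markov's
inequality bounds the failure probability of a single policy by `δ / |Π|` (`single_policy_tail`).
-/

open MeasureTheory ProbabilityTheory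

/-- A stochastic contextual bandit instance: context distribution `ν`, behavior policy `μb`,
reward kernel `rker` supported on `[0,1]`, and mean reward function `r`. -/
structure CBSetup (𝓧 𝓐 : Type*) [MeasurableSpace 𝓧] [Fintype 𝓐] [MeasurableSpace 𝓐] where
  /-- the context distribution -/
  ν : Measure 𝓧
  ν_prob : IsProbabilityMeasure ν
  /-- the behavior policy `μ(a|x)` -/
  μb : 𝓧 → 𝓐 → ℝ
  μb_nonneg : ∀ x a, 0 ≤ μb x a
  μb_sum_one : ∀ x, ∑ a, μb x a = 1
  μb_meas : ∀ a, Measurable fun x => μb x a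
  /-- the reward kernel `p(·|x,a)` -/
  rker : 𝓧 → 𝓐 → Measure ℝ
  rker_prob : ∀ x a, IsProbabilityMeasure (rker x a)
  rker_supp : ∀ x a, rker x a (Set.Icc (0:ℝ) 1)ᶜ = 0
  rker_meas : ∀ a, Measurable fun x => rker x a
  /-- the mean reward `r(x,a)` -/
  r : 𝓧 → 𝓐 → ℝ
  r_def : ∀ x a, r x a = ∫ ρ, ρ ∂(rker x a)
  r_meas : ∀ a, Measurable fun x => r x a

variable {𝓧 𝓐 : Type*} [MeasurableSpace 𝓧] [Fintype 𝓐] [MeasurableSpace 𝓐]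
  [MeasurableSingletonClass 𝓐]

/-- The law of a single observation `(X, A, R)` with `X ~ ν`, `A ~ μ(·|X)`, `R ~ p(·|X,A)`. -/
noncomputable def obsLaw (S : CBSetup 𝓧 𝓐) : Measure (𝓧 × 𝓐 × ℝ) :=
  S.ν.bind fun x => Measure.sum fun a =>
    ENNReal.ofReal (S.μb x a) • (S.rker x a).map fun ρ => (x, a, ρ)

/-- The law of the i.i.d. dataset `(X_t, A_t, R_t)_{t=1}^n`. -/
noncomputable def dataLaw (S : CBSetup 𝓧 𝓐) (n : ℕ) : Measure (Fin n → 𝓧 × 𝓐 × ℝ) :=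
  Measure.pi fun _ : Fin n => obsLaw S

/-- A (stochastic, measurable) policy: a map from contexts to distributions over actions. -/
def IsPolicy (π : 𝓧 → 𝓐 → ℝ) : Prop :=
  (∀ x a, 0 ≤ π x a) ∧ (∀ x, ∑ a, π x a = 1) ∧ (∀ a, Measurable fun x => π x a)

/-- The value `v(π) = E[Σ_a π(a|X) r(X,a)]` of a policy. -/
noncomputable def pval (S : CBSetup 𝓧 𝓐) (π : 𝓧 → 𝓐 → ℝ) : ℝ :=
  ∫ x, ∑ a, π x a * S.r x a ∂S.ν

/-- The smoothed coverage ratio `C_γ(π) = E[Σ_a π(a|X) r(X,a)/(μ(a|X)+γ)]`. -/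
noncomputable def covγ (S : CBSetup 𝓧 𝓐) (γ : ℝ) (π : 𝓧 → 𝓐 → ℝ) : ℝ :=
  ∫ x, ∑ a, π x a * S.r x a / (S.μb x a + γ) ∂S.ν

/-- The IX reward estimate `r̃(π) = π(A|X) R / (μ(A|X) + γ)` for one observation `ω = (X,A,R)`. -/
noncomputable def ixTerm (S : CBSetup 𝓧 𝓐) (γ : ℝ) (π : 𝓧 → 𝓐 → ℝ) (ω : 𝓧 × 𝓐 × ℝ) : ℝ :=
  π ω.1 ω.2.1 * ω.2.2 / (S.μb ω.1 ω.2.1 + γ)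

/-- The IX value estimator `ṽ_n(π) = (1/n) Σ_t π(A_t|X_t) R_t / (μ(A_t|X_t) + γ)`. -/
noncomputable def ixEst (S : CBSetup 𝓧 𝓐) (γ : ℝ) {n : ℕ} (π : 𝓧 → 𝓐 → ℝ)
    (D : Fin n → 𝓧 × 𝓐 × ℝ) : ℝ :=
  (∑ t, ixTerm S γ π (D t)) / n

/-! ### Elementary inequalities and integrals -/

lemma exp_neg_le_quadratic {y : ℝ} (hy : 0 ≤ y) : Real.exp (-y) ≤ 1 - y + y ^ 2 / 2 := by
  have h := Real.quadratic_le_exp_of_nonneg hy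
  rw [Real.exp_neg, inv_le_iff_one_le_mul₀ (Real.exp_pos y)]
  have hpos : 0 ≤ 1 - y + y ^ 2 / 2 := by nlinarith [sq_nonneg (y - 1)]
  -- `(1 - y + y² / 2) (1 + y + y² / 2) = 1 + y⁴ / 4`
  calc (1 : ℝ) ≤ (1 - y + y ^ 2 / 2) * (1 + y + y ^ 2 / 2) := by nlinarith [sq_nonneg (y ^ 2)]
    _ ≤ _ := mul_le_mul_of_nonneg_left h hpos

/-- The contribution of one action to the conditional exponential moment, where `m = μ(a|x)`,
`p = π(a|x)` and `r = r(x,a)`. -/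
lemma action_bound {γ m p r : ℝ} (hγ : 0 < γ) (hm : 0 ≤ m) (hp : 0 ≤ p) (hp1 : p ≤ 1)
    (hr : 0 ≤ r) :
    m * (1 - 2 * γ * (p / (m + γ)) * r + 2 * γ ^ 2 * (p / (m + γ)) ^ 2 * r) ≤
      m - 2 * γ * (p * r) + 4 * γ ^ 2 * (p * r / (m + γ)) := by
  have hd : 0 < m + γ := by linarith
  obtain ⟨w, hw⟩ : ∃ w, w = p / (m + γ) := ⟨_, rfl⟩
  have hw0 : 0 ≤ w := hw ▸ div_nonneg hp hd.le
  have hpw : p = w * (m + γ) := by rw [hw]; field_simp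
  have hmw : m * w ≤ 1 := by nlinarith
  have hdiv : p * r / (m + γ) = w * r := by rw [hw]; ring
  rw [hdiv, ← hw, hpw]
  have key : 0 ≤ γ ^ 2 * (w * r) * (1 - m * w) :=
    mul_nonneg (by positivity) (by linarith)
  nlinarith

lemma integral_one_sub_add {Ω : Type*} [MeasurableSpace Ω] {P : Measure Ω}
    [IsProbabilityMeasure P] {f g : Ω → ℝ} (hf : Integrable f P) (hg : Integrable g P) (c d : ℝ) :
    ∫ x, (1 - c * f x + d * g x) ∂P = 1 - c * ∫ x, f x ∂P + d * ∫ x, g x ∂P := by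
  have h1 : Integrable (fun x => 1 - c * f x) P := (integrable_const _).sub (hf.const_mul c)
  rw [integral_add h1 (hg.const_mul d), integral_sub (integrable_const _) (hf.const_mul c),
    integral_const_mul, integral_const_mul]
  simp

lemma lintegral_pi_prod_le_one {Ω : Type*} [MeasurableSpace Ω] {P : Measure Ω}
    [IsProbabilityMeasure P] (n : ℕ) {Y : Ω → ENNReal} (hY : Measurable Y)
    (hY1 : ∫⁻ ω, Y ω ∂P ≤ 1) :
    ∫⁻ D, ∏ t, Y (D t) ∂(Measure.pi fun _ : Fin n => P) ≤ 1 := by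
  have hind : iIndepFun (fun (t : Fin n) (D : Fin n → Ω) => Y (D t))
      (Measure.pi fun _ : Fin n => P) := iIndepFun_pi (X := fun _ => Y) fun _ => hY.aemeasurable
  rw [lintegral_prod_eq_prod_lintegral_of_indepFun Finset.univ
    (fun (t : Fin n) (D : Fin n → Ω) => Y (D t)) hind
    (fun t => hY.comp (measurable_pi_apply t))]
  refine Finset.prod_le_one' fun t _ => ?_
  rw [(measurePreserving_eval (fun _ : Fin n => P) t).lintegral_comp hY]
  exact hY1

/-! ### The law of one observation -/

lemma rker_ae_mem (S : CBSetup 𝓧 𝓐) (x : 𝓧) (a : 𝓐) :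
    ∀ᵐ ρ ∂(S.rker x a), ρ ∈ Set.Icc (0 : ℝ) 1 :=
  S.rker_supp x a

lemma integrable_reward (S : CBSetup 𝓧 𝓐) (x : 𝓧) (a : 𝓐) :
    Integrable (fun ρ : ℝ => ρ) (S.rker x a) := by
  have := S.rker_prob x a
  refine Integrable.of_bound measurable_id.aestronglyMeasurable 1 ?_
  filter_upwards [rker_ae_mem S x a] with ρ hρ
  rw [Real.norm_eq_abs, abs_le]
  exact ⟨by linarith [hρ.1], hρ.2⟩

lemma r_mem (S : CBSetup 𝓧 𝓐) (x : 𝓧) (a : 𝓐) : S.r x a ∈ Set.Icc (0 : ℝ) 1 := by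
  have := S.rker_prob x a
  rw [S.r_def]
  constructor
  · exact integral_nonneg_of_ae ((rker_ae_mem S x a).mono fun ρ hρ => hρ.1)
  · calc ∫ ρ, ρ ∂(S.rker x a) ≤ ∫ _, (1 : ℝ) ∂(S.rker x a) :=
          integral_mono_ae (integrable_reward S x a) (integrable_const _)
            ((rker_ae_mem S x a).mono fun ρ hρ => hρ.2)
      _ = 1 := by simp

lemma measurable_obsKernel (S : CBSetup 𝓧 𝓐) :
    Measurable fun x => Measure.sum fun a =>
      ENNReal.ofReal (S.μb x a) • (S.rker x a).map fun ρ => (x, a, ρ) := by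
  refine Measure.measurable_of_measurable_coe _ fun s hs => ?_
  have hmk : ∀ (x : 𝓧) (a : 𝓐), Measurable fun ρ : ℝ => (x, a, ρ) := fun x a => by fun_prop
  simp only [Measure.sum_apply _ hs, Measure.smul_apply, smul_eq_mul, tsum_fintype,
    Measure.map_apply (hmk _ _) hs]
  refine Finset.measurable_sum _ fun a _ => ?_
  refine (S.μb_meas a).ennreal_ofReal.mul ?_
  let κ : Kernel 𝓧 ℝ := ⟨fun x => S.rker x a, S.rker_meas a⟩
  have : IsMarkovKernel κ := ⟨fun x => S.rker_prob x a⟩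
  have hmk' : Measurable fun q : 𝓧 × ℝ => (q.1, a, q.2) := by fun_prop
  exact Kernel.measurable_kernel_prodMk_left (κ := κ) (hmk' hs)

lemma lintegral_obsLaw (S : CBSetup 𝓧 𝓐) {f : 𝓧 × 𝓐 × ℝ → ENNReal} (hf : Measurable f) :
    ∫⁻ ω, f ω ∂(obsLaw S) =
      ∫⁻ x, ∑ a, ENNReal.ofReal (S.μb x a) * ∫⁻ ρ, f (x, a, ρ) ∂(S.rker x a) ∂S.ν := by
  have hmk : ∀ (x : 𝓧) (a : 𝓐), Measurable fun ρ : ℝ => (x, a, ρ) := fun x a => by fun_prop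
  rw [obsLaw, Measure.lintegral_bind (measurable_obsKernel S).aemeasurable hf.aemeasurable]
  refine lintegral_congr fun x => ?_
  rw [lintegral_sum_measure, tsum_fintype]
  refine Finset.sum_congr rfl fun a _ => ?_
  rw [lintegral_smul_measure, lintegral_map hf (hmk x a), smul_eq_mul]

lemma isProbabilityMeasure_obsLaw (S : CBSetup 𝓧 𝓐) : IsProbabilityMeasure (obsLaw S) := by
  have := S.ν_prob
  have := S.rker_prob
  constructor
  rw [← lintegral_one, lintegral_obsLaw S measurable_const]
  simp [← ENNReal.ofReal_sum_of_nonneg fun a _ => S.μb_nonneg _ a, S.μb_sum_one]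

lemma measurable_ixTerm (S : CBSetup 𝓧 𝓐) (γ : ℝ) {π : 𝓧 → 𝓐 → ℝ} (hπ : IsPolicy π) :
    Measurable (ixTerm S γ π) := by
  have aux : ∀ {g : 𝓧 → 𝓐 → ℝ}, (∀ a, Measurable fun x => g x a) →
      Measurable fun ω : 𝓧 × 𝓐 × ℝ => g ω.1 ω.2.1 := fun {g} hg => by
    have h : Measurable fun q : 𝓧 × 𝓐 => g q.1 q.2 := measurable_from_prod_countable_left hg
    exact h.comp (measurable_fst.prodMk (measurable_fst.comp measurable_snd))
  exact ((aux hπ.2.2).mul (measurable_snd.comp measurable_snd)).div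
    ((aux S.μb_meas).add measurable_const)

lemma IsPolicy.le_one {π : 𝓧 → 𝓐 → ℝ} (hπ : IsPolicy π) (x : 𝓧) (a : 𝓐) : π x a ≤ 1 := by
  rw [← hπ.2.1 x]
  exact Finset.single_le_sum (fun b _ => hπ.1 x b) (Finset.mem_univ a)

lemma integrable_val (S : CBSetup 𝓧 𝓐) {π : 𝓧 → 𝓐 → ℝ} (hπ : IsPolicy π) :
    Integrable (fun x => ∑ a, π x a * S.r x a) S.ν := by
  have := S.ν_prob
  refine integrable_finsetSum _ fun a _ => ?_
  refine Integrable.of_bound ((hπ.2.2 a).mul (S.r_meas a)).aestronglyMeasurable 1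
    (Filter.Eventually.of_forall fun x => ?_)
  have hr := r_mem S x a
  rw [Real.norm_eq_abs, abs_of_nonneg (mul_nonneg (hπ.1 x a) hr.1)]
  exact mul_le_one₀ (hπ.le_one x a) hr.1 hr.2

lemma integrable_cov (S : CBSetup 𝓧 𝓐) {γ : ℝ} (hγ : 0 < γ) {π : 𝓧 → 𝓐 → ℝ} (hπ : IsPolicy π) :
    Integrable (fun x => ∑ a, π x a * S.r x a / (S.μb x a + γ)) S.ν := by
  have := S.ν_prob
  refine integrable_finsetSum _ fun a _ => ?_
  refine Integrable.of_bound (((hπ.2.2 a).mul (S.r_meas a)).div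
    ((S.μb_meas a).add measurable_const)).aestronglyMeasurable (1 / γ)
    (Filter.Eventually.of_forall fun x => ?_)
  have hr := r_mem S x a
  have hm := S.μb_nonneg x a
  rw [Real.norm_eq_abs, abs_of_nonneg
    (div_nonneg (mul_nonneg (hπ.1 x a) hr.1) (by linarith))]
  exact div_le_div₀ zero_le_one (mul_le_one₀ (hπ.le_one x a) hr.1 hr.2) hγ (by linarith)

/-! ### Exponential moments and tails of the IX estimator -/

/-- Exponential moment of the IX term conditionally on the context and the action. -/
lemma lintegral_rker_exp_le (S : CBSetup 𝓧 𝓐) {γ : ℝ} (hγ : 0 < γ) {π : 𝓧 → 𝓐 → ℝ}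
    (hπ : IsPolicy π) (x : 𝓧) (a : 𝓐) :
    ∫⁻ ρ, ENNReal.ofReal (Real.exp (-(2 * γ * ixTerm S γ π (x, a, ρ)))) ∂(S.rker x a) ≤
      ENNReal.ofReal (1 - 2 * γ * (π x a / (S.μb x a + γ)) * S.r x a +
        2 * γ ^ 2 * (π x a / (S.μb x a + γ)) ^ 2 * S.r x a) := by
  have := S.rker_prob x a
  obtain ⟨w, hw⟩ : ∃ w, w = π x a / (S.μb x a + γ) := ⟨_, rfl⟩
  have hw0 : 0 ≤ w := hw ▸ div_nonneg (hπ.1 x a) (by linarith [S.μb_nonneg x a])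
  have hterm : ∀ ρ, ixTerm S γ π (x, a, ρ) = w * ρ := fun ρ => by
    simp only [ixTerm, hw]; ring
  have hint := integrable_reward S x a
  have hint' : Integrable (fun ρ : ℝ => 1 - 2 * γ * w * ρ + 2 * γ ^ 2 * w ^ 2 * ρ) (S.rker x a) :=
    ((integrable_const _).sub (hint.const_mul _)).add (hint.const_mul _)
  have hbound : ∀ᵐ ρ ∂(S.rker x a),
      Real.exp (-(2 * γ * (w * ρ))) ≤ 1 - 2 * γ * w * ρ + 2 * γ ^ 2 * w ^ 2 * ρ := by
    filter_upwards [rker_ae_mem S x a] with ρ hρ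
    have h0 : 0 ≤ 2 * γ * (w * ρ) := mul_nonneg (by linarith) (mul_nonneg hw0 hρ.1)
    have h1 := exp_neg_le_quadratic h0
    have h2 : 0 ≤ 2 * γ ^ 2 * w ^ 2 * (ρ * (1 - ρ)) :=
      mul_nonneg (by positivity) (mul_nonneg hρ.1 (by linarith [hρ.2]))
    nlinarith
  simp only [hterm, ← hw]
  calc ∫⁻ ρ, ENNReal.ofReal (Real.exp (-(2 * γ * (w * ρ)))) ∂(S.rker x a)
      ≤ ∫⁻ ρ, ENNReal.ofReal (1 - 2 * γ * w * ρ + 2 * γ ^ 2 * w ^ 2 * ρ) ∂(S.rker x a) :=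
        lintegral_mono_ae (hbound.mono fun ρ hρ => ENNReal.ofReal_le_ofReal hρ)
    _ = ENNReal.ofReal (∫ ρ, (1 - 2 * γ * w * ρ + 2 * γ ^ 2 * w ^ 2 * ρ) ∂(S.rker x a)) :=
        (ofReal_integral_eq_lintegral_ofReal hint'
          (hbound.mono fun ρ hρ => (Real.exp_pos _).le.trans hρ)).symm
    _ = _ := by
        rw [integral_one_sub_add hint hint, ← S.r_def]

lemma lintegral_exp_ixTerm_le (S : CBSetup 𝓧 𝓐) {γ : ℝ} (hγ : 0 < γ) {π : 𝓧 → 𝓐 → ℝ}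
    (hπ : IsPolicy π) :
    ∫⁻ ω, ENNReal.ofReal (Real.exp (-(2 * γ * ixTerm S γ π ω))) ∂(obsLaw S) ≤
      ENNReal.ofReal (Real.exp (-(2 * γ * pval S π) + 4 * γ ^ 2 * covγ S γ π)) := by
  have := S.ν_prob
  have hmeas : Measurable fun ω => ENNReal.ofReal (Real.exp (-(2 * γ * ixTerm S γ π ω))) := by
    have := measurable_ixTerm S γ hπ
    fun_prop
  rw [lintegral_obsLaw S hmeas]
  have hv := integrable_val S hπ
  have hc := integrable_cov S hγ hπ
  -- positivity of the conditional bound, as `1 - y + y² / 2 > 0` and `r ≤ 1`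
  have hnn : ∀ x a, 0 ≤ 1 - 2 * γ * (π x a / (S.μb x a + γ)) * S.r x a +
      2 * γ ^ 2 * (π x a / (S.μb x a + γ)) ^ 2 * S.r x a := fun x a => by
    have hr := r_mem S x a
    generalize π x a / (S.μb x a + γ) = w
    nlinarith [sq_nonneg (2 * γ * w - 1), mul_nonneg hr.1 (sq_nonneg (2 * γ * w - 1)), hr.1, hr.2]
  have hpt : ∀ x, ∑ a, S.μb x a * (1 - 2 * γ * (π x a / (S.μb x a + γ)) * S.r x a +
      2 * γ ^ 2 * (π x a / (S.μb x a + γ)) ^ 2 * S.r x a) ≤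
      1 - 2 * γ * (∑ a, π x a * S.r x a) +
        4 * γ ^ 2 * ∑ a, π x a * S.r x a / (S.μb x a + γ) := fun x => by
    refine (Finset.sum_le_sum fun a _ => action_bound hγ (S.μb_nonneg x a) (hπ.1 x a)
      (hπ.le_one x a) (r_mem S x a).1).trans (le_of_eq ?_)
    rw [Finset.sum_add_distrib, Finset.sum_sub_distrib, S.μb_sum_one x, ← Finset.mul_sum,
      ← Finset.mul_sum]
  calc _ ≤ ∫⁻ x, ENNReal.ofReal (1 - 2 * γ * (∑ a, π x a * S.r x a) +
        4 * γ ^ 2 * ∑ a, π x a * S.r x a / (S.μb x a + γ)) ∂S.ν := by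
        refine lintegral_mono fun x => ?_
        refine (Finset.sum_le_sum fun a _ =>
          mul_le_mul_right (lintegral_rker_exp_le S hγ hπ x a) _).trans ?_
        simp only [← ENNReal.ofReal_mul (S.μb_nonneg x _)]
        rw [← ENNReal.ofReal_sum_of_nonneg fun a _ => mul_nonneg (S.μb_nonneg x a) (hnn x a)]
        exact ENNReal.ofReal_le_ofReal (hpt x)
    _ = ENNReal.ofReal (∫ x, (1 - 2 * γ * (∑ a, π x a * S.r x a) +
        4 * γ ^ 2 * ∑ a, π x a * S.r x a / (S.μb x a + γ)) ∂S.ν) :=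
        (ofReal_integral_eq_lintegral_ofReal
          (((integrable_const _).sub (hv.const_mul _)).add (hc.const_mul _))
          (Filter.Eventually.of_forall fun x => (Finset.sum_nonneg fun a _ =>
            mul_nonneg (S.μb_nonneg x a) (hnn x a)).trans (hpt x))).symm
    _ = ENNReal.ofReal (1 - 2 * γ * pval S π + 4 * γ ^ 2 * covγ S γ π) := by
        rw [integral_one_sub_add hv hc, pval, covγ]
    _ ≤ _ := by
        refine ENNReal.ofReal_le_ofReal ?_
        linarith [Real.add_one_le_exp (-(2 * γ * pval S π) + 4 * γ ^ 2 * covγ S γ π)]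

lemma lintegral_exp_ixEst_le (S : CBSetup 𝓧 𝓐) {n : ℕ} (hn : 0 < n) {γ : ℝ} (hγ : 0 < γ)
    {π : 𝓧 → 𝓐 → ℝ} (hπ : IsPolicy π) :
    ∫⁻ D, ENNReal.ofReal (Real.exp (2 * γ * n *
      (pval S π - ixEst S γ π D - 2 * γ * covγ S γ π))) ∂(dataLaw S n) ≤ 1 := by
  have := isProbabilityMeasure_obsLaw S
  have hn' : (n : ℝ) ≠ 0 := by positivity
  let b : ℝ := 2 * γ * pval S π - 4 * γ ^ 2 * covγ S γ π
  let Y : 𝓧 × 𝓐 × ℝ → ENNReal := fun ω =>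
    ENNReal.ofReal (Real.exp b) * ENNReal.ofReal (Real.exp (-(2 * γ * ixTerm S γ π ω)))
  have hY : Measurable Y := by
    have := measurable_ixTerm S γ hπ
    fun_prop
  have hprod : ∀ D : Fin n → 𝓧 × 𝓐 × ℝ, ENNReal.ofReal (Real.exp (2 * γ * n *
      (pval S π - ixEst S γ π D - 2 * γ * covγ S γ π))) = ∏ t, Y (D t) := fun D => by
    simp only [Y, ← ENNReal.ofReal_mul (Real.exp_pos b).le, ← Real.exp_add]
    rw [← ENNReal.ofReal_prod_of_nonneg fun t _ => (Real.exp_pos _).le, ← Real.exp_sum,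
      Finset.sum_add_distrib, Finset.sum_neg_distrib, ← Finset.mul_sum]
    congr 2
    simp only [ixEst, b, Finset.sum_const, Finset.card_univ, Fintype.card_fin, nsmul_eq_mul]
    field_simp
    ring
  have hY1 : ∫⁻ ω, Y ω ∂(obsLaw S) ≤ 1 := by
    rw [lintegral_const_mul' _ _ ENNReal.ofReal_ne_top]
    refine (mul_le_mul_right (lintegral_exp_ixTerm_le S hγ hπ) _).trans ?_
    rw [← ENNReal.ofReal_mul (Real.exp_pos b).le, ← Real.exp_add]
    simp [b]
  simp only [hprod]
  exact lintegral_pi_prod_le_one n hY hY1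

/-- Markov's inequality applied to the exponential moment, for one policy; `K` plays the role of
the cardinality of the policy class. -/
lemma single_policy_tail (S : CBSetup 𝓧 𝓐) {n : ℕ} (hn : 0 < n) {γ δ K : ℝ} (hγ : 0 < γ)
    (hδ : 0 < δ) (hK : 0 < K) {π : 𝓧 → 𝓐 → ℝ} (hπ : IsPolicy π) :
    dataLaw S n {D | ¬ pval S π - ixEst S γ π D ≤
      Real.log (K / δ) / (2 * γ * n) + 2 * γ * covγ S γ π} ≤ ENNReal.ofReal (δ / K) := by
  have hmeas : Measurable fun D : Fin n → 𝓧 × 𝓐 × ℝ => ENNReal.ofReal (Real.exp (2 * γ * n *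
      (pval S π - ixEst S γ π D - 2 * γ * covγ S γ π))) := by
    have := measurable_ixTerm S γ hπ
    unfold ixEst
    fun_prop
  have hpos : 0 < 2 * γ * n := by positivity
  have hmarkov := (mul_meas_ge_le_lintegral (μ := dataLaw S n) hmeas
    (ENNReal.ofReal (K / δ))).trans (lintegral_exp_ixEst_le S hn hγ hπ)
  have hle : dataLaw S n {D | ¬ pval S π - ixEst S γ π D ≤
      Real.log (K / δ) / (2 * γ * n) + 2 * γ * covγ S γ π} ≤
      dataLaw S n {D | ENNReal.ofReal (K / δ) ≤ ENNReal.ofReal (Real.exp (2 * γ * n *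
        (pval S π - ixEst S γ π D - 2 * γ * covγ S γ π)))} := by
    refine measure_mono fun D hD => ?_
    simp only [Set.mem_ofPred_eq, not_le] at hD ⊢
    refine ENNReal.ofReal_le_ofReal ?_
    rw [← Real.log_le_iff_le_exp (by positivity)]
    have h : Real.log (K / δ) / (2 * γ * n) <
        pval S π - ixEst S γ π D - 2 * γ * covγ S γ π := by linarith
    rw [div_lt_iff₀ hpos] at h
    linarith
  refine hle.trans ?_
  rw [← inv_div K δ, ENNReal.ofReal_inv_of_pos (by positivity), ENNReal.le_inv_iff_mul_le, mul_comm]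
  exact hmarkov

/-- Lemma 2: with probability at least `1-δ`, simultaneously for all
`π ∈ Pol`, `v(π) - ṽ_n(π) ≤ log(|Π|/δ)/(2γn) + 2γ C_γ(π)`. -/
theorem ix_lower_tail
    (S : CBSetup 𝓧 𝓐) {n : ℕ} (hn : 0 < n) (γ δ : ℝ) (hγ : 0 < γ)
    (hδ0 : 0 < δ) (hδ1 : δ < 1)
    (Pol : Finset (𝓧 → 𝓐 → ℝ)) (hpol : ∀ π ∈ Pol, IsPolicy π) :
    ENNReal.ofReal (1 - δ) ≤
      dataLaw S n {D : Fin n → 𝓧 × 𝓐 × ℝ | ∀ π ∈ Pol,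
        pval S π - ixEst S γ π D ≤
          Real.log ((Pol.card : ℝ) / δ) / (2 * γ * n) + 2 * γ * covγ S γ π} := by
  have := isProbabilityMeasure_obsLaw S
  have hprob : IsProbabilityMeasure (dataLaw S n) := by unfold dataLaw; infer_instance
  set E : Set (Fin n → 𝓧 × 𝓐 × ℝ) := {D | ∀ π ∈ Pol,
        pval S π - ixEst S γ π D ≤
          Real.log ((Pol.card : ℝ) / δ) / (2 * γ * n) + 2 * γ * covγ S γ π} with hE
  have hcompl : dataLaw S n Eᶜ ≤ ENNReal.ofReal δ := by
    have hsub : Eᶜ ⊆ ⋃ π ∈ Pol, {D | ¬ pval S π - ixEst S γ π D ≤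
        Real.log ((Pol.card : ℝ) / δ) / (2 * γ * n) + 2 * γ * covγ S γ π} := by
      intro D hD
      simpa [hE] using hD
    refine (measure_mono hsub).trans ((measure_biUnion_finset_le _ _).trans ?_)
    rcases Pol.eq_empty_or_nonempty with hemp | hne
    · simp [hemp]
    have hK : (0 : ℝ) < Pol.card := by exact_mod_cast hne.card_pos
    refine (Finset.sum_le_sum fun π hπ =>
      single_policy_tail S hn hγ hδ0 hK (hpol π hπ)).trans (le_of_eq ?_)
    rw [← ENNReal.ofReal_sum_of_nonneg fun _ _ => by positivity]
    congr 1
    rw [Finset.sum_const, nsmul_eq_mul]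
    field_simp
  -- only subadditivity is used, so `E` need not be shown measurable
  have huniv : 1 ≤ dataLaw S n E + dataLaw S n Eᶜ := by
    rw [← hprob.measure_univ, ← Set.union_compl_self E]
    exact measure_union_le _ _
  rw [ENNReal.ofReal_sub _ hδ0.le, ENNReal.ofReal_one]
  exact tsub_le_iff_right.2 (huniv.trans (add_le_add_right hcompl _))
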